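/- One-step expectation bound for Quantile-RaSK with inexact step (Theorem 3.2(a)): let λ > 0, f(x) = λ‖x‖₁ + (1/2)‖x‖², let A ∈ ℝ^{m×n} be full rank with unit-norm rows a_1ᵀ, …, a_mᵀ, let b = A x̂ + b^c + r where b^c has exactly βm nonzero entries, A x̂ ≠ 0, and x̂ is the unique solution of min_x f(x) subject to A x = A x̂; assume β < q < 1 − β with qm, βm integers, and that condition (♦) holds: (2√(β(1−β))/(1−β−q))·(σ_max + √((1−β)m/n)) + (β(1−β)/(1−β−q)²)·(σ_max + 2√((1−β)m/n)) < (α(q−β)/(2q))·σ̃_{q−β,min}²/σ_max, where α = |x̂|_min/(|x̂|_min + 2λ). Let x ∈ ℝ^n with x* ∈ ∂f(x) ∩ Range(Aᵀ), let Q be the q-quantile of (|⟨a_i, x⟩ − b_i|)_{i=1}^m, let N₂ = {i : |⟨a_i, x⟩ − b_i| ≤ Q} and assume |N₂| = qm. For i ∈ N₂ define x_i'* = x* − (⟨a_i, x⟩ − b_i)·a_i and x_i' = S_λ(x_i'*). Then (1/(qm))·Σ_{i ∈ N₂} D_f^{x_i'*}(x_i', x̂) ≤ (1 − C₁)·D_f^{x*}(x,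 x̂) + C₂·‖r‖_∞², where C₁ = (α(q−β)/(2q²))·σ̃_{q−β,min}²/m − (2√(β(1−β))/(q(1−β−q)))·(σ_max²/m + √(1−β)·σ_max/√(mn)) − (β(1−β)/(q(1−β−q)²))·(σ_max²/m + 2√(1−β)·σ_max/√(mn)) and C₂ = (√β(1−β)/(q(1−β−q)))·(1 + √(β(1−β))/(1−β−q))·√(n/m)·σ_max + (1/2)·β(1−β)²/(q(1−β−q)²) + 1/2. -/

import Mathlib

/-- Euclidean inner product on finite-dimensional real coordinate space. -/
noncomputable def ip {I : Type*} [Fintype I] (u v : I → ℝ) : ℝ := ∑ i, u i * v i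

/-- Euclidean norm. -/
noncomputable def enorm2 {I : Type*} [Fintype I] (v : I → ℝ) : ℝ :=
  Real.sqrt (∑ i, (v i) ^ 2)

/-- ℓ₁ norm. -/
noncomputable def norm1 {I : Type*} [Fintype I] (v : I → ℝ) : ℝ := ∑ i, |v i|

/-- ℓ∞ norm. -/
noncomputable def normInf {I : Type*} [Fintype I] (v : I → ℝ) : ℝ := ⨆ i, |v i|

/-- Subdifferential of a convex function. -/
def subdiff {I : Type*} [Fintype I] (f : (I → ℝ) → ℝ) (x : I → ℝ) : Set (I → ℝ) :=
  {g | ∀ y, f y ≥ f x + ip g (y - x)}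

/-- Bregman distance `D_f^{g}(x, y)` with respect to `f` and subgradient `g ∈ ∂f(x)`. -/
noncomputable def breg {I : Type*} [Fintype I] (f : (I → ℝ) → ℝ) (g x y : I → ℝ) : ℝ :=
  f y - f x - ip g (y - x)

/-- Fenchel conjugate. -/
noncomputable def fconj {I : Type*} [Fintype I] (f : (I → ℝ) → ℝ) (u : I → ℝ) : ℝ :=
  ⨆ z, (ip u z - f z)

/-- Soft shrinkage (soft thresholding) operator. -/
noncomputable def softShrink {I : Type*} [Fintype I] (lam : ℝ) (x : I → ℝ) : I → ℝ :=
  fun i => Real.sign (x i) * max (|x i| - lam) 0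

/-- Smallest singular value `σ_min(M) = inf_{x ≠ 0} ‖Mx‖/‖x‖`. -/
noncomputable def sigmaMin {I J : Type*} [Fintype I] [Fintype J] (M : Matrix I J ℝ) : ℝ :=
  sInf {r | ∃ x : J → ℝ, x ≠ 0 ∧ r = enorm2 (M.mulVec x) / enorm2 x}

/-- Largest singular value `σ_max(M) = sup_{x ≠ 0} ‖Mx‖/‖x‖`. -/
noncomputable def sigmaMax {I J : Type*} [Fintype I] [Fintype J] (M : Matrix I J ℝ) : ℝ :=
  sSup {r | ∃ x : J → ℝ, x ≠ 0 ∧ r = enorm2 (M.mulVec x) / enorm2 x}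

/-- Frobenius norm. -/
noncomputable def frobNorm {I J : Type*} [Fintype I] [Fintype J] (M : Matrix I J ℝ) : ℝ :=
  Real.sqrt (∑ i, ∑ j, (M i j) ^ 2)

/-- `‖A‖_{1,2} = sqrt (∑ i ‖a_i‖₁²)` where `a_iᵀ` are the rows of `A`. -/
noncomputable def norm12 {m n : ℕ} (A : Matrix (Fin m) (Fin n) ℝ) : ℝ :=
  Real.sqrt (∑ i, (norm1 (A i)) ^ 2)

/-- Column submatrix `A_J`. -/
noncomputable def colSub {m n : ℕ} (A : Matrix (Fin m) (Fin n) ℝ) (J : Finset (Fin n)) :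
    Matrix (Fin m) {j // j ∈ J} ℝ := A.submatrix id Subtype.val

/-- Row submatrix `A_I`. -/
noncomputable def rowSub {m n : ℕ} (A : Matrix (Fin m) (Fin n) ℝ) (I : Finset (Fin m)) :
    Matrix {i // i ∈ I} (Fin n) ℝ := A.submatrix Subtype.val id

/-- Submatrix `A_{I,J}` with rows in `I` and columns in `J`. -/
noncomputable def subMat {m n : ℕ} (A : Matrix (Fin m) (Fin n) ℝ)
    (I : Finset (Fin m)) (J : Finset (Fin n)) :
    Matrix {i // i ∈ I} {j // j ∈ J} ℝ := A.submatrix Subtype.val Subtype.val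

/-- `σ̃_min(A) = min{σ_min(A_J) : J ⊆ {1,…,n}, A_J ≠ 0}`. -/
noncomputable def sigmaTildeMin {m n : ℕ} (A : Matrix (Fin m) (Fin n) ℝ) : ℝ :=
  sInf {r | ∃ J : Finset (Fin n), colSub A J ≠ 0 ∧ r = sigmaMin (colSub A J)}

/-- `σ̃_{q−β,min}(A)` (with `k = (q−β)m`): min of `σ_min(A_{I,J})` over `|I| = k` and
`J` nonempty. -/
noncomputable def sigmaTildeQBMin {m n : ℕ} (A : Matrix (Fin m) (Fin n) ℝ) (k : ℕ) : ℝ :=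
  sInf {r | ∃ (I : Finset (Fin m)) (J : Finset (Fin n)),
    I.card = k ∧ J.Nonempty ∧ r = sigmaMin (subMat A I J)}

/-- Variant of `σ̃_{q−β,min}(A)` requiring moreover `A_J ≠ 0`. -/
noncomputable def sigmaTildeQBMin' {m n : ℕ} (A : Matrix (Fin m) (Fin n) ℝ) (k : ℕ) : ℝ :=
  sInf {r | ∃ (I : Finset (Fin m)) (J : Finset (Fin n)),
    I.card = k ∧ J.Nonempty ∧ colSub A J ≠ 0 ∧ r = sigmaMin (subMat A I J)}

/-- `σ_{q−β,min}(A)` (with `k = (q−β)m`): min of `σ_min(A_I)` over `|I| = k`. -/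
noncomputable def sigmaQBMin {m n : ℕ} (A : Matrix (Fin m) (Fin n) ℝ) (k : ℕ) : ℝ :=
  sInf {r | ∃ I : Finset (Fin m), I.card = k ∧ r = sigmaMin (rowSub A I)}

/-- The increasingly sorted rearrangement `y_(1) ≤ … ≤ y_(m)` of a finite tuple. -/
noncomputable def sortedVal {m : ℕ} (y : Fin m → ℝ) : Fin m → ℝ := y ∘ Tuple.sort y

/-- The `q`-quantile of `y_1, …, y_m` in the case where `qm = k` is an integer:
`(y_(k) + y_(k+1))/2` (1-indexed). -/
noncomputable def quantileAt {m : ℕ} (k : ℕ) (y : Fin m → ℝ) : ℝ :=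
  if h : 0 < k ∧ k < m then
    (sortedVal y ⟨k - 1, by omega⟩ + sortedVal y ⟨k, h.2⟩) / 2
  else 0

/-- `|x̂|_min = min{|x̂_j| : x̂_j ≠ 0}`. -/
noncomputable def xminOf {n : ℕ} (xhat : Fin n → ℝ) : ℝ :=
  sInf {r | ∃ j, xhat j ≠ 0 ∧ r = |xhat j|}

/-!
Write `D = D_f^{x*}(x, x̂)`, `d = ‖x - x̂‖`, `e = A(x - x̂)`, `R = ‖r‖_∞` and
`tᵢ = ⟨aᵢ, x⟩ - bᵢ`. Since `f` is 1-strongly convex, stepping along `-tᵢ aᵢ` changes `D` by at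
most `tᵢ² / 2 - tᵢ eᵢ`. On an uncorrupted row `tᵢ = eᵢ - rᵢ`, so this is `(rᵢ² - eᵢ²) / 2`; at
least `(q - β)m` accepted rows are uncorrupted, and on them `∑ eᵢ² ≥ σ̃² d² ≥ α σ̃² D`. An
accepted corrupted row only satisfies `|tᵢ| ≤ Q` and costs at most `Q |eᵢ| + Q² / 2`; there are at
most `βm` of these, so Cauchy–Schwarz and `‖e‖ ≤ σ_max d` bound their total cost in terms of `Q`.

The threshold is itself controlled by the iterate: at least `(1 - β - q)m` rows are rejected and
uncorrupted, each with `Q ≤ |eᵢ| + R`, which gives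
`(1 - β - q) Q ≤ √(1 - β) σ_max d / √m + (1 - β) R`. The constants then result from `d² ≤ 2D`
and `d R ≤ 2D / √n + √n R²`.
-/

section Norms

variable {I : Type*} [Fintype I]

theorem ip_eq_dotProduct (u v : I → ℝ) : ip u v = u ⬝ᵥ v := rfl

theorem enorm2_sq (v : I → ℝ) : enorm2 v ^ 2 = ∑ i, v i ^ 2 :=
  Real.sq_sqrt (Finset.sum_nonneg fun _ _ => sq_nonneg _)

theorem enorm2_sq_eq_dotProduct (v : I → ℝ) : enorm2 v ^ 2 = v ⬝ᵥ v := by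
  simp only [enorm2_sq, dotProduct, ← sq]

theorem enorm2_nonneg (v : I → ℝ) : 0 ≤ enorm2 v := Real.sqrt_nonneg _

theorem enorm2_eq_norm_toLp (v : I → ℝ) : enorm2 v = ‖WithLp.toLp 2 v‖ := by
  simp only [enorm2, EuclideanSpace.norm_eq, Real.norm_eq_abs, sq_abs]

theorem enorm2_sub_comm (u v : I → ℝ) : enorm2 (u - v) = enorm2 (v - u) := by
  simp only [enorm2, Pi.sub_apply, sub_sq_comm]

@[simp]
theorem enorm2_zero : enorm2 (0 : I → ℝ) = 0 := by
  simp [enorm2]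

theorem enorm2_pos {v : I → ℝ} (hv : v ≠ 0) : 0 < enorm2 v := by
  rw [enorm2_eq_norm_toLp, norm_pos_iff]
  simpa using hv

theorem norm1_add_le (u v : I → ℝ) : norm1 (u + v) ≤ norm1 u + norm1 v := by
  rw [norm1, norm1, norm1, ← Finset.sum_add_distrib]
  exact Finset.sum_le_sum fun i _ => abs_add_le (u i) (v i)

theorem norm1_smul (c : ℝ) (v : I → ℝ) : norm1 (c • v) = |c| * norm1 v := by
  simp only [norm1, Pi.smul_apply, smul_eq_mul, abs_mul, Finset.mul_sum]

theorem norm1_single [DecidableEq I] (j : I) (s : ℝ) :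
    norm1 (Pi.single j s : I → ℝ) = |s| := by
  rw [norm1, Finset.sum_eq_single j (fun i _ hi => by rw [Pi.single_eq_of_ne hi, abs_zero])
    (by simp), Pi.single_eq_same]

theorem convexOn_const_mul_norm1 {lam : ℝ} (hlam : 0 ≤ lam) :
    ConvexOn ℝ Set.univ fun v : I → ℝ => lam * norm1 v := by
  refine ConvexOn.smul hlam ⟨convex_univ, fun u _ v _ a b ha hb _ => ?_⟩
  calc norm1 (a • u + b • v) ≤ norm1 (a • u) + norm1 (b • v) := norm1_add_le _ _
    _ = a • norm1 u + b • norm1 v := by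
      rw [norm1_smul, norm1_smul, abs_of_nonneg ha, abs_of_nonneg hb, smul_eq_mul, smul_eq_mul]

theorem abs_le_normInf (v : I → ℝ) (i : I) : |v i| ≤ normInf v :=
  le_ciSup (f := fun i => |v i|) (Set.finite_range _).bddAbove i

theorem normInf_nonneg (v : I → ℝ) : 0 ≤ normInf v :=
  Real.iSup_nonneg fun _ => abs_nonneg _

theorem sum_abs_le_sqrt_card_mul_enorm2 (S : Finset I) (v : I → ℝ) :
    ∑ i ∈ S, |v i| ≤ √S.card * enorm2 v := by
  have hS : (∑ i ∈ S, |v i|) ^ 2 ≤ S.card * ∑ i ∈ S, v i ^ 2 := by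
    simpa only [sq_abs] using sq_sum_le_card_mul_sum_sq (s := S) (f := fun i => |v i|)
  have hsub : ∑ i ∈ S, v i ^ 2 ≤ ∑ i, v i ^ 2 :=
    Finset.sum_le_univ_sum_of_nonneg fun _ => sq_nonneg _
  rw [enorm2, ← Real.sqrt_mul (Nat.cast_nonneg _)]
  exact Real.le_sqrt_of_sq_le (hS.trans (mul_le_mul_of_nonneg_left hsub (Nat.cast_nonneg _)))

end Norms

section Bregman

variable {I : Type*} [Fintype I]

theorem mem_subdiff_iff_breg_nonneg {f : (I → ℝ) → ℝ} {g x : I → ℝ} :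
    g ∈ subdiff f x ↔ ∀ y, 0 ≤ breg f g x y :=
  forall_congr' fun y => by rw [breg, sub_sub, sub_nonneg]

theorem breg_add_half_enorm2_sq (φ : (I → ℝ) → ℝ) (g x y : I → ℝ) :
    breg (fun z => φ z + 1 / 2 * enorm2 z ^ 2) g x y =
      breg φ (g - x) x y + 1 / 2 * enorm2 (y - x) ^ 2 := by
  simp only [breg, ip_eq_dotProduct, enorm2_sq_eq_dotProduct, dotProduct_sub, sub_dotProduct,
    dotProduct_comm y x]
  ring

theorem breg_add_smul_sub_le {φ : (I → ℝ) → ℝ} (hφ : ConvexOn ℝ Set.univ φ) (p x y : I → ℝ)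
    {t : ℝ} (ht₀ : 0 ≤ t) (ht₁ : t ≤ 1) :
    breg φ p x (x + t • (y - x)) ≤ t * breg φ p x y := by
  have hconv : φ (x + t • (y - x)) ≤ (1 - t) * φ x + t * φ y := by
    have hpoint : x + t • (y - x) = (1 - t) • x + t • y := by module
    simpa only [hpoint, smul_eq_mul] using
      hφ.2 (Set.mem_univ x) (Set.mem_univ y) (sub_nonneg.2 ht₁) ht₀ (sub_add_cancel 1 t)
  simp only [breg, ip_eq_dotProduct, add_sub_cancel_left, dotProduct_smul, smul_eq_mul]
  linarith

theorem sub_mem_subdiff_of_convexOn {φ : (I → ℝ) → ℝ} (hφ : ConvexOn ℝ Set.univ φ)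
    {g x : I → ℝ} (hg : g ∈ subdiff (fun z => φ z + 1 / 2 * enorm2 z ^ 2) x) :
    g - x ∈ subdiff φ x := by
  rw [mem_subdiff_iff_breg_nonneg] at hg ⊢
  intro y
  set B := breg φ (g - x) x y
  have hsegment : ∀ t ∈ Set.Ioc (0 : ℝ) 1, 0 ≤ B + t * (1 / 2 * enorm2 (y - x) ^ 2) := by
    rintro t ⟨ht₀, ht₁⟩
    have hnonneg := hg (x + t • (y - x))
    have hle := breg_add_smul_sub_le hφ (g - x) x y ht₀.le ht₁
    have hsq : enorm2 (t • (y - x)) ^ 2 = t ^ 2 * enorm2 (y - x) ^ 2 := by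
      simp only [enorm2_sq, Pi.smul_apply, smul_eq_mul, mul_pow, Finset.mul_sum]
    rw [breg_add_half_enorm2_sq, add_sub_cancel_left, hsq] at hnonneg
    refine nonneg_of_mul_nonneg_right (a := t) ?_ ht₀
    linarith
  have hlim : Filter.Tendsto (fun t : ℝ => B + t * (1 / 2 * enorm2 (y - x) ^ 2))
      (nhdsWithin 0 (Set.Ioi 0)) (nhds B) := by
    have hcont : Continuous fun t : ℝ => B + t * (1 / 2 * enorm2 (y - x) ^ 2) := by fun_prop
    simpa using (hcont.tendsto 0).mono_left nhdsWithin_le_nhds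
  exact ge_of_tendsto hlim (Filter.eventually_of_mem (Ioc_mem_nhdsGT one_pos) hsegment)

theorem half_enorm2_sq_le_breg {φ : (I → ℝ) → ℝ} (hφ : ConvexOn ℝ Set.univ φ) {g x : I → ℝ}
    (hg : g ∈ subdiff (fun z => φ z + 1 / 2 * enorm2 z ^ 2) x) (y : I → ℝ) :
    1 / 2 * enorm2 (y - x) ^ 2 ≤ breg (fun z => φ z + 1 / 2 * enorm2 z ^ 2) g x y := by
  rw [breg_add_half_enorm2_sq]
  exact le_add_of_nonneg_left
    (mem_subdiff_iff_breg_nonneg.1 (sub_mem_subdiff_of_convexOn hφ hg) y)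

theorem breg_sub_le {f : (I → ℝ) → ℝ} {g x x' : I → ℝ}
    (hx' : 1 / 2 * enorm2 (x' - x) ^ 2 ≤ breg f g x x') (v y : I → ℝ) :
    breg f (g - v) x' y ≤ breg f g x y - ip v (x - y) + 1 / 2 * enorm2 v ^ 2 := by
  have hthree_point :
      breg f (g - v) x' y = breg f g x y - breg f g x x' - ip v (x - y) - ip v (x' - x) := by
    simp only [breg, ip_eq_dotProduct, dotProduct_sub, sub_dotProduct]
    ring
  have hsquare : enorm2 (v + (x' - x)) ^ 2 =
      enorm2 v ^ 2 + 2 * ip v (x' - x) + enorm2 (x' - x) ^ 2 := by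
    simp only [enorm2_sq_eq_dotProduct, ip_eq_dotProduct, add_dotProduct, dotProduct_add,
      dotProduct_comm (x' - x) v]
    ring
  linarith [sq_nonneg (enorm2 (v + (x' - x)))]

end Bregman

section L1

variable {I : Type*} [Fintype I] {lam : ℝ} {p x : I → ℝ}

theorem abs_le_of_mem_subdiff_norm1 (hlam : 0 ≤ lam)
    (hp : p ∈ subdiff (fun z => lam * norm1 z) x) (j : I) : |p j| ≤ lam := by
  classical
  have hmul : ∀ s : ℝ, p j * s ≤ lam * |s| := fun s => by
    have hsub := hp (x + Pi.single j s)
    have hadd : lam * norm1 (x + Pi.single j s) ≤ lam * (norm1 x + |s|) := by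
      refine mul_le_mul_of_nonneg_left ?_ hlam
      simpa only [norm1_single] using norm1_add_le x (Pi.single j s)
    rw [add_sub_cancel_left, ip_eq_dotProduct, dotProduct_single] at hsub
    linarith
  have hpos := hmul 1
  have hneg := hmul (-1)
  norm_num at hpos hneg
  exact abs_le.2 ⟨by linarith, hpos⟩

theorem mul_eq_of_mem_subdiff_norm1 (hlam : 0 ≤ lam)
    (hp : p ∈ subdiff (fun z => lam * norm1 z) x) (j : I) : p j * x j = lam * |x j| := by
  have hle : ∀ i ∈ Finset.univ, p i * x i ≤ lam * |x i| := fun i _ =>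
    calc p i * x i ≤ |p i| * |x i| := (le_abs_self _).trans (abs_mul _ _).le
      _ ≤ lam * |x i| :=
        mul_le_mul_of_nonneg_right (abs_le_of_mem_subdiff_norm1 hlam hp i) (abs_nonneg _)
  have hge : ∑ i, lam * |x i| ≤ ∑ i, p i * x i := by
    have hzero := hp 0
    simp only [ip, norm1, Pi.sub_apply, Pi.zero_apply, abs_zero, Finset.sum_const_zero, mul_zero,
      zero_sub, mul_neg, Finset.sum_neg_distrib] at hzero
    rw [← Finset.mul_sum]
    linarith
  exact (Finset.sum_eq_sum_iff_of_le hle).1 (hge.antisymm' (Finset.sum_le_sum hle)) j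
    (Finset.mem_univ j)

theorem mul_abs_sub_mul_le {p x y μ : ℝ} (hp : |p| ≤ lam) (hpx : p * x = lam * |x|)
    (hy : y ≠ 0 → μ ≤ |y|) :
    μ * (lam * |y| - p * y) ≤ 2 * lam * (x - y) ^ 2 := by
  have hlam : 0 ≤ lam := (abs_nonneg p).trans hp
  rcases eq_or_ne y 0 with rfl | hy₀
  · simp only [abs_zero, mul_zero, sub_zero]
    positivity
  rcases lt_or_ge 0 (x * y) with hxy | hxy
  · have hpy : p * y = lam * |y| := by
      have habs : |x| * y = x * |y| := by
        rcases pos_and_pos_or_neg_and_neg_of_mul_pos hxy with ⟨hx, hy⟩ | ⟨hx, hy⟩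
        · rw [abs_of_pos hx, abs_of_pos hy]
        · rw [abs_of_neg hx, abs_of_neg hy]; ring
      refine mul_left_cancel₀ (left_ne_zero_of_mul hxy.ne') ?_
      linear_combination y * hpx + lam * habs
    rw [hpy, sub_self, mul_zero]
    positivity
  · have hpy : |p * y| ≤ lam * |y| :=
      (abs_mul p y).trans_le (mul_le_mul_of_nonneg_right hp (abs_nonneg y))
    obtain ⟨hlower, hupper⟩ := abs_le.1 hpy
    calc μ * (lam * |y| - p * y) ≤ |y| * (2 * lam * |y|) :=
          mul_le_mul (hy hy₀) (by linarith) (sub_nonneg.2 hupper) (abs_nonneg y)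
      _ = 2 * lam * y ^ 2 := by rw [← sq_abs y]; ring
      _ ≤ 2 * lam * (x - y) ^ 2 :=
          mul_le_mul_of_nonneg_left (by nlinarith [sq_nonneg x]) (by positivity)

theorem mul_breg_norm1_le {y : I → ℝ} {μ : ℝ} (hlam : 0 ≤ lam)
    (hp : p ∈ subdiff (fun z => lam * norm1 z) x)
    (hy : ∀ j, y j ≠ 0 → μ ≤ |y j|) :
    μ * breg (fun z => lam * norm1 z) p x y ≤ 2 * lam * enorm2 (x - y) ^ 2 := by
  have hbreg : breg (fun z => lam * norm1 z) p x y = ∑ j, (lam * |y j| - p j * y j) := by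
    simp only [breg, norm1, ip, Pi.sub_apply, Finset.mul_sum, ← Finset.sum_sub_distrib]
    refine Finset.sum_congr rfl fun j _ => ?_
    linear_combination mul_eq_of_mem_subdiff_norm1 hlam hp j
  rw [hbreg, enorm2_sq, Finset.mul_sum, Finset.mul_sum]
  exact Finset.sum_le_sum fun j _ => mul_abs_sub_mul_le (abs_le_of_mem_subdiff_norm1 hlam hp j)
    (mul_eq_of_mem_subdiff_norm1 hlam hp j) (hy j)

end L1

section XMin

variable {n : ℕ}

theorem xminOf_nonneg (y : Fin n → ℝ) : 0 ≤ xminOf y := by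
  refine Real.sInf_nonneg ?_
  rintro _ ⟨j, _, rfl⟩
  exact abs_nonneg _

theorem xminOf_le_abs (y : Fin n → ℝ) {j : Fin n} (hj : y j ≠ 0) : xminOf y ≤ |y j| := by
  refine csInf_le ⟨0, ?_⟩ ⟨j, hj, rfl⟩
  rintro _ ⟨i, _, rfl⟩
  exact abs_nonneg _

theorem xminOf_div_mul_breg_le {lam : ℝ} (hlam : 0 ≤ lam) {g x : Fin n → ℝ}
    (hg : g ∈ subdiff (fun z => lam * norm1 z + 1 / 2 * enorm2 z ^ 2) x) (y : Fin n → ℝ) :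
    xminOf y / (xminOf y + 2 * lam) *
        breg (fun z => lam * norm1 z + 1 / 2 * enorm2 z ^ 2) g x y ≤
      enorm2 (x - y) ^ 2 := by
  have hμ := xminOf_nonneg y
  have hnorm1 := mul_breg_norm1_le (y := y) hlam
    (sub_mem_subdiff_of_convexOn (convexOn_const_mul_norm1 hlam) hg) fun _ => xminOf_le_abs y
  rw [breg_add_half_enorm2_sq, enorm2_sub_comm, div_mul_eq_mul_div]
  refine div_le_of_le_mul₀ (by positivity) (sq_nonneg _) ?_
  linarith [mul_nonneg hμ (sq_nonneg (enorm2 (x - y)))]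

end XMin

section SingularValues

variable {I J : Type*} [Fintype I] [Fintype J]

open scoped Matrix.Norms.L2Operator in
theorem exists_enorm2_mulVec_le (M : Matrix I J ℝ) :
    ∃ K, ∀ v, enorm2 (M.mulVec v) ≤ K * enorm2 v := by
  classical
  refine ⟨‖M‖, fun v => ?_⟩
  rw [enorm2_eq_norm_toLp, enorm2_eq_norm_toLp]
  exact M.l2_opNorm_mulVec (WithLp.toLp 2 v)

theorem sigmaMax_nonneg (M : Matrix I J ℝ) : 0 ≤ sigmaMax M := by
  refine Real.sSup_nonneg ?_
  rintro _ ⟨v, _, rfl⟩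
  exact div_nonneg (enorm2_nonneg _) (enorm2_nonneg _)

theorem enorm2_mulVec_le_sigmaMax_mul (M : Matrix I J ℝ) (v : J → ℝ) :
    enorm2 (M.mulVec v) ≤ sigmaMax M * enorm2 v := by
  rcases eq_or_ne v 0 with rfl | hv
  · simp
  obtain ⟨K, hK⟩ := exists_enorm2_mulVec_le M
  rw [← div_le_iff₀ (enorm2_pos hv)]
  refine le_csSup ⟨K, ?_⟩ ⟨v, hv, rfl⟩
  rintro _ ⟨w, hw, rfl⟩
  exact (div_le_iff₀ (enorm2_pos hw)).2 (hK w)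

theorem sigmaMin_nonneg (M : Matrix I J ℝ) : 0 ≤ sigmaMin M := by
  refine Real.sInf_nonneg ?_
  rintro _ ⟨v, _, rfl⟩
  exact div_nonneg (enorm2_nonneg _) (enorm2_nonneg _)

theorem sigmaMin_mul_enorm2_le (M : Matrix I J ℝ) (v : J → ℝ) :
    sigmaMin M * enorm2 v ≤ enorm2 (M.mulVec v) := by
  rcases eq_or_ne v 0 with rfl | hv
  · simp
  rw [← le_div_iff₀ (enorm2_pos hv)]
  refine csInf_le ⟨0, ?_⟩ ⟨v, hv, rfl⟩
  rintro _ ⟨w, _, rfl⟩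
  exact div_nonneg (enorm2_nonneg _) (enorm2_nonneg _)

variable {m n : ℕ} (A : Matrix (Fin m) (Fin n) ℝ)

theorem sigmaTildeQBMin_nonneg (k : ℕ) : 0 ≤ sigmaTildeQBMin A k := by
  refine Real.sInf_nonneg ?_
  rintro _ ⟨S, T, _, _, rfl⟩
  exact sigmaMin_nonneg _

theorem sigmaTildeQBMin_card_le (S : Finset (Fin m)) {T : Finset (Fin n)} (hT : T.Nonempty) :
    sigmaTildeQBMin A S.card ≤ sigmaMin (subMat A S T) := by
  refine csInf_le ⟨0, ?_⟩ ⟨S, T, rfl, hT, rfl⟩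
  rintro _ ⟨S, T, _, _, rfl⟩
  exact sigmaMin_nonneg _

theorem enorm2_subMat_univ_mulVec_sq (S : Finset (Fin m)) (v : Fin n → ℝ) :
    enorm2 ((subMat A S Finset.univ).mulVec fun j => v j) ^ 2 = ∑ i ∈ S, A.mulVec v i ^ 2 := by
  rw [enorm2_sq, ← Finset.sum_coe_sort S]
  refine Finset.sum_congr rfl fun i _ => congrArg (· ^ 2) ?_
  exact Finset.sum_coe_sort Finset.univ fun j => A i j * v j

theorem sigmaTildeQBMin_sq_mul_enorm2_sq_le {k : ℕ} {S : Finset (Fin m)} (hk : k ≤ S.card)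
    (v : Fin n → ℝ) :
    sigmaTildeQBMin A k ^ 2 * enorm2 v ^ 2 ≤ ∑ i ∈ S, A.mulVec v i ^ 2 := by
  rcases eq_or_ne v 0 with rfl | hv
  · simp
  obtain ⟨j, -⟩ := Function.ne_iff.1 hv
  obtain ⟨S', hS', rfl⟩ := Finset.exists_subset_card_eq hk
  set w : {j // j ∈ (Finset.univ : Finset (Fin n))} → ℝ := fun j => v j
  have hw : enorm2 w = enorm2 v :=
    congrArg Real.sqrt (Finset.sum_coe_sort Finset.univ fun j => v j ^ 2)
  have hσ : sigmaTildeQBMin A S'.card * enorm2 v ≤ enorm2 ((subMat A S' Finset.univ).mulVec w) :=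
    calc sigmaTildeQBMin A S'.card * enorm2 v
        ≤ sigmaMin (subMat A S' Finset.univ) * enorm2 v :=
          mul_le_mul_of_nonneg_right (sigmaTildeQBMin_card_le A S' ⟨j, Finset.mem_univ j⟩)
            (enorm2_nonneg v)
      _ ≤ enorm2 ((subMat A S' Finset.univ).mulVec w) := hw ▸ sigmaMin_mul_enorm2_le _ w
  calc sigmaTildeQBMin A S'.card ^ 2 * enorm2 v ^ 2
      = (sigmaTildeQBMin A S'.card * enorm2 v) ^ 2 := (mul_pow _ _ 2).symm
    _ ≤ enorm2 ((subMat A S' Finset.univ).mulVec w) ^ 2 :=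
      pow_le_pow_left₀ (mul_nonneg (sigmaTildeQBMin_nonneg A _) (enorm2_nonneg v)) hσ 2
    _ = ∑ i ∈ S', A.mulVec v i ^ 2 := enorm2_subMat_univ_mulVec_sq A S' v
    _ ≤ ∑ i ∈ S, A.mulVec v i ^ 2 :=
      Finset.sum_le_sum_of_subset_of_nonneg hS' fun _ _ _ => sq_nonneg _

end SingularValues

section Corruption

theorem sqrt_mul_mul_eq {c m : ℝ} (hc : 0 ≤ c) (hm : 0 < m) (w : ℝ) :
    √(c * m) * w = m * (√c * (w / √m)) := by
  rw [Real.sqrt_mul hc]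
  field_simp
  rw [Real.sq_sqrt hm.le]
  ring

variable {I : Type*} [Fintype I]

theorem card_sub_card_sub_card_mul_le {N C : Finset I} {e : I → ℝ} {Q R : ℝ} (hQ : 0 ≤ Q)
    (hR : 0 ≤ R) (h : ∀ i ∉ N, i ∉ C → Q ≤ |e i| + R) :
    (Fintype.card I - C.card - N.card : ℝ) * Q ≤
      √(Fintype.card I - C.card) * enorm2 e + (Fintype.card I - C.card) * R := by
  classical
  set U := (N ∪ C)ᶜ
  have hcompl (S : Finset I) : (S.card : ℝ) + Sᶜ.card = Fintype.card I := by
    exact_mod_cast Finset.card_add_card_compl S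
  have hlower : (Fintype.card I - C.card - N.card : ℝ) ≤ U.card := by
    have hunion : ((N ∪ C).card : ℝ) ≤ N.card + C.card := by
      exact_mod_cast Finset.card_union_le N C
    linarith [hcompl (N ∪ C)]
  have hupper : (U.card : ℝ) ≤ Fintype.card I - C.card := by
    have hsubset : (U.card : ℝ) ≤ Cᶜ.card := by
      exact_mod_cast Finset.card_le_card (Finset.compl_subset_compl.2 Finset.subset_union_right)
    linarith [hcompl C]
  calc (Fintype.card I - C.card - N.card : ℝ) * Q ≤ U.card * Q :=
        mul_le_mul_of_nonneg_right hlower hQ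
    _ ≤ ∑ i ∈ U, (|e i| + R) := by
      rw [← nsmul_eq_mul]
      refine Finset.card_nsmul_le_sum _ _ _ fun i hi => ?_
      rw [Finset.mem_compl, Finset.mem_union, not_or] at hi
      exact h i hi.1 hi.2
    _ ≤ √U.card * enorm2 e + U.card * R := by
      rw [Finset.sum_add_distrib, Finset.sum_const, nsmul_eq_mul]
      exact add_le_add_left (sum_abs_le_sqrt_card_mul_enorm2 U e) _
    _ ≤ √(Fintype.card I - C.card) * enorm2 e + (Fintype.card I - C.card) * R :=
      add_le_add (mul_le_mul_of_nonneg_right (Real.sqrt_le_sqrt hupper) (enorm2_nonneg e))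
        (mul_le_mul_of_nonneg_right hupper hR)

theorem mul_threshold_le {J : Type*} [Fintype J] (A : Matrix I J ℝ) (v : J → ℝ)
    {N C : Finset I} {t : I → ℝ} {β q Q R : ℝ} (hβ : 0 ≤ 1 - β) (hI : 0 < (Fintype.card I : ℝ))
    (hNcard : (N.card : ℝ) = q * Fintype.card I) (hCcard : (C.card : ℝ) = β * Fintype.card I)
    (hQ : 0 ≤ Q) (hR : 0 ≤ R) (hN : ∀ i ∉ N, Q ≤ |t i|)
    (hC : ∀ i ∉ C, |t i - A.mulVec v i| ≤ R) :
    (1 - β - q) * Q ≤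
      √(1 - β) * (sigmaMax A * enorm2 v / √(Fintype.card I)) + (1 - β) * R := by
  have hcompl : (Fintype.card I : ℝ) - C.card = (1 - β) * Fintype.card I := by
    rw [hCcard, sub_mul, one_mul]
  have hcount := card_sub_card_sub_card_mul_le (e := A.mulVec v) hQ hR fun i hiN hiC => by
    linarith [hN i hiN, hC i hiC, abs_sub_abs_le_abs_sub (t i) (A.mulVec v i)]
  have hσ := mul_le_mul_of_nonneg_left (enorm2_mulVec_le_sigmaMax_mul A v)
    (Real.sqrt_nonneg ((1 - β) * Fintype.card I))
  rw [sqrt_mul_mul_eq hβ hI (sigmaMax A * enorm2 v)] at hσ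
  rw [hcompl, hNcard] at hcount
  refine le_of_mul_le_mul_left ?_ hI
  linarith

variable [DecidableEq I]

theorem sum_half_sq_sub_mul_le {N C : Finset I} {e t : I → ℝ} {Q R : ℝ} (hQ : 0 ≤ Q)
    (hN : ∀ i ∈ N, |t i| ≤ Q) (hC : ∀ i ∉ C, |t i - e i| ≤ R) :
    ∑ i ∈ N, (t i ^ 2 / 2 - t i * e i) ≤
      N.card * (R ^ 2 / 2) - 1 / 2 * ∑ i ∈ N \ C, e i ^ 2 + Q * (√C.card * enorm2 e) +
        C.card * (Q ^ 2 / 2) := by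
  have hsqrt : √((N ∩ C).card : ℝ) ≤ √C.card :=
    Real.sqrt_le_sqrt (by exact_mod_cast Finset.card_le_card Finset.inter_subset_right)
  have hcorrupted : ∑ i ∈ N ∩ C, (t i ^ 2 / 2 - t i * e i) ≤
      C.card * (Q ^ 2 / 2) + Q * (√C.card * enorm2 e) :=
    calc ∑ i ∈ N ∩ C, (t i ^ 2 / 2 - t i * e i) ≤ ∑ i ∈ N ∩ C, (Q ^ 2 / 2 + Q * |e i|) := by
          refine Finset.sum_le_sum fun i hi => ?_
          have hti := hN i (Finset.mem_inter.1 hi).1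
          have hsq : t i ^ 2 ≤ Q ^ 2 := sq_le_sq' (abs_le.1 hti).1 (abs_le.1 hti).2
          have hmul : -(t i * e i) ≤ Q * |e i| := (neg_le_abs _).trans <|
            (abs_mul _ _).trans_le (mul_le_mul_of_nonneg_right hti (abs_nonneg _))
          linarith
      _ = (N ∩ C).card * (Q ^ 2 / 2) + Q * ∑ i ∈ N ∩ C, |e i| := by
          rw [Finset.sum_add_distrib, Finset.sum_const, nsmul_eq_mul, Finset.mul_sum]
      _ ≤ C.card * (Q ^ 2 / 2) + Q * (√C.card * enorm2 e) := by
          gcongr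
          · exact Finset.inter_subset_right
          · exact (sum_abs_le_sqrt_card_mul_enorm2 _ e).trans
              (mul_le_mul_of_nonneg_right hsqrt (enorm2_nonneg e))
  have huncorrupted : ∑ i ∈ N \ C, (t i ^ 2 / 2 - t i * e i) ≤
      N.card * (R ^ 2 / 2) - 1 / 2 * ∑ i ∈ N \ C, e i ^ 2 :=
    calc ∑ i ∈ N \ C, (t i ^ 2 / 2 - t i * e i)
        ≤ ∑ i ∈ N \ C, (R ^ 2 / 2 - 1 / 2 * e i ^ 2) := by
          refine Finset.sum_le_sum fun i hi => ?_
          have hri := hC i (Finset.mem_sdiff.1 hi).2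
          linarith [sq_le_sq' (abs_le.1 hri).1 (abs_le.1 hri).2]
      _ = (N \ C).card * (R ^ 2 / 2) - 1 / 2 * ∑ i ∈ N \ C, e i ^ 2 := by
          rw [Finset.sum_sub_distrib, Finset.sum_const, nsmul_eq_mul, Finset.mul_sum]
      _ ≤ N.card * (R ^ 2 / 2) - 1 / 2 * ∑ i ∈ N \ C, e i ^ 2 := by
          gcongr
          exact Finset.sdiff_subset
  rw [← Finset.sum_inter_add_sum_sdiff N C]
  linarith

theorem sum_breg_sub_smul_le {J : Type*} [Fintype J] {f : (J → ℝ) → ℝ} {g x : J → ℝ}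
    (hf : ∀ z, 1 / 2 * enorm2 (z - x) ^ 2 ≤ breg f g x z) {A : Matrix I J ℝ}
    (hrows : ∀ i, enorm2 (A i) = 1) {N C : Finset I} {t : I → ℝ} {y : J → ℝ} {Q R : ℝ}
    (hQ : 0 ≤ Q) (hN : ∀ i ∈ N, |t i| ≤ Q) (hC : ∀ i ∉ C, |t i - A.mulVec (x - y) i| ≤ R)
    (x' : I → J → ℝ) :
    ∑ i ∈ N, breg f (g - t i • A i) (x' i) y ≤
      N.card * (breg f g x y + R ^ 2 / 2) - 1 / 2 * ∑ i ∈ N \ C, A.mulVec (x - y) i ^ 2 +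
        Q * (√C.card * (sigmaMax A * enorm2 (x - y))) + C.card * (Q ^ 2 / 2) := by
  set e := A.mulVec (x - y)
  have hrow (i : I) : breg f (g - t i • A i) (x' i) y ≤
      breg f g x y + (t i ^ 2 / 2 - t i * e i) := by
    have hstep := breg_sub_le (hf (x' i)) (t i • A i) y
    have hnorm : enorm2 (t i • A i) ^ 2 = t i ^ 2 := by
      simp only [enorm2_sq, Pi.smul_apply, smul_eq_mul, mul_pow, ← Finset.mul_sum]
      rw [← enorm2_sq, hrows i, one_pow, mul_one]
    have hip : ip (t i • A i) (x - y) = t i * e i := smul_dotProduct (t i) (A i) (x - y)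
    rw [hnorm, hip] at hstep
    linarith
  have hsum : ∑ i ∈ N, breg f (g - t i • A i) (x' i) y ≤
      N.card * breg f g x y + ∑ i ∈ N, (t i ^ 2 / 2 - t i * e i) := by
    rw [← nsmul_eq_mul, ← Finset.sum_const, ← Finset.sum_add_distrib]
    exact Finset.sum_le_sum fun i _ => hrow i
  have hcorr : Q * (√C.card * enorm2 e) ≤ Q * (√C.card * (sigmaMax A * enorm2 (x - y))) := by
    gcongr
    exact enorm2_mulVec_le_sigmaMax_mul A (x - y)
  linarith [sum_half_sq_sub_mul_le hQ hN hC]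

end Corruption

section Constants

theorem corruption_cost_le {β g u Q R : ℝ} (hβ₀ : 0 ≤ β) (hβ₁ : 0 ≤ 1 - β) (hg : 0 < g)
    (hu : 0 ≤ u) (hQ₀ : 0 ≤ Q) (hQ : g * Q ≤ √(1 - β) * u + (1 - β) * R) :
    √β * u * Q + β * Q ^ 2 / 2 ≤
      (√(β * (1 - β)) / g + β * (1 - β) / (2 * g ^ 2)) * u ^ 2 +
        √β * (1 - β) / g * (1 + √(β * (1 - β)) / g) * (u * R) +
          β * (1 - β) ^ 2 / (2 * g ^ 2) * R ^ 2 := by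
  set P := (√(1 - β) * u + (1 - β) * R) / g with hP
  have hQP : Q ≤ P := (le_div_iff₀' hg).2 hQ
  calc √β * u * Q + β * Q ^ 2 / 2 ≤ √β * u * P + β * P ^ 2 / 2 := by gcongr
    _ = _ := by
      have ha := Real.sq_sqrt hβ₀
      have hc := Real.sq_sqrt hβ₁
      rw [hP, Real.sqrt_mul hβ₀]
      linear_combination
        β / 2 / g ^ 2 * u ^ 2 * hc - √(1 - β) * (1 - β) / g ^ 2 * u * R * ha

theorem mul_le_div_sqrt_add_sqrt_mul {n d D R : ℝ} (hn : 0 < n) (hdD : d ^ 2 ≤ 2 * D) :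
    d * R ≤ 2 * D / √n + √n * R ^ 2 := by
  rw [div_add' _ _ _ (by positivity), le_div_iff₀ (by positivity)]
  linarith [sq_nonneg (d - √n * R), sq_nonneg (√n * R), sq_nonneg d]

theorem corruption_cost_le_of_sq_le {β g m n s d D R Q : ℝ} (hβ₀ : 0 ≤ β) (hβ₁ : 0 ≤ 1 - β)
    (hg : 0 < g) (hm : 0 < m) (hn : 0 < n) (hs : 0 ≤ s) (hd : 0 ≤ d) (hQ₀ : 0 ≤ Q)
    (hdD : d ^ 2 ≤ 2 * D) (hQ : g * Q ≤ √(1 - β) * (s * d / √m) + (1 - β) * R) :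
    √β * (s * d / √m) * Q + β * Q ^ 2 / 2 ≤
      (2 * √(β * (1 - β)) / g * (s ^ 2 / m + √(1 - β) * s / √(m * n)) +
        β * (1 - β) / g ^ 2 * (s ^ 2 / m + 2 * √(1 - β) * s / √(m * n))) * D +
      (√β * (1 - β) / g * (1 + √(β * (1 - β)) / g) * √(n / m) * s +
        1 / 2 * (β * (1 - β) ^ 2 / g ^ 2)) * R ^ 2 := by
  set κ := √(β * (1 - β)) / g + β * (1 - β) / (2 * g ^ 2) with hκ
  set ν := √β * (1 - β) / g * (1 + √(β * (1 - β)) / g) with hν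
  have hνsqrt : ν = √(1 - β) * (√(β * (1 - β)) / g + β * (1 - β) / g ^ 2) := by
    rw [hν, Real.sqrt_mul hβ₀]
    linear_combination
      -(√β / g) * Real.sq_sqrt hβ₁ + √(1 - β) * (1 - β) / g ^ 2 * Real.sq_sqrt hβ₀
  have husq : κ * (s * d / √m) ^ 2 ≤ κ * (2 * (s ^ 2 / m) * D) := by
    have hsq : (s * d / √m) ^ 2 = s ^ 2 / m * d ^ 2 := by
      rw [div_pow, mul_pow, Real.sq_sqrt hm.le, div_mul_eq_mul_div]
    rw [hsq, mul_comm 2, mul_assoc]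
    gcongr
  have huR : ν * (s * d / √m * R) ≤ ν * (2 * (s / √(m * n)) * D + √(n / m) * s * R ^ 2) := by
    have hdR := mul_le_mul_of_nonneg_left (mul_le_div_sqrt_add_sqrt_mul (R := R) hn hdD)
      (by positivity : 0 ≤ s / √m)
    refine mul_le_mul_of_nonneg_left ?_ (by positivity)
    rw [Real.sqrt_mul hm.le, Real.sqrt_div hn.le]
    convert hdR using 1 <;> ring
  calc √β * (s * d / √m) * Q + β * Q ^ 2 / 2
      ≤ κ * (s * d / √m) ^ 2 + ν * (s * d / √m * R) + β * (1 - β) ^ 2 / (2 * g ^ 2) * R ^ 2 :=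
        corruption_cost_le hβ₀ hβ₁ hg (by positivity) hQ₀ hQ
    _ ≤ κ * (2 * (s ^ 2 / m) * D) + ν * (2 * (s / √(m * n)) * D + √(n / m) * s * R ^ 2) +
          β * (1 - β) ^ 2 / (2 * g ^ 2) * R ^ 2 :=
        add_le_add_left (add_le_add husq huR) _
    _ = _ := by
      linear_combination 2 * (s ^ 2 / m) * D * hκ + 2 * (s / √(m * n)) * D * hνsqrt

theorem one_div_mul_le_of_corruption_cost {β m n q s d D R Q τ X : ℝ} (hβ₀ : 0 ≤ β)
    (hm : 0 < m) (hn : 0 < n) (hq : 0 < q) (hg : 0 < 1 - β - q) (hs : 0 ≤ s) (hd : 0 ≤ d)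
    (hQ₀ : 0 ≤ Q) (hτ : 0 ≤ τ) (hdD : d ^ 2 ≤ 2 * D)
    (hQ : (1 - β - q) * Q ≤ √(1 - β) * (s * d / √m) + (1 - β) * R)
    (hX : X ≤ m * (q * (D + R ^ 2 / 2) - τ * D / (2 * m) +
      (√β * (s * d / √m) * Q + β * Q ^ 2 / 2))) :
    1 / (q * m) * X ≤
      (1 - (τ * (q - β) / (2 * q ^ 2 * m) -
        2 * √(β * (1 - β)) / (q * (1 - β - q)) *
          (s ^ 2 / m + √(1 - β) * s / √(m * n)) -
        β * (1 - β) / (q * (1 - β - q) ^ 2) *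
          (s ^ 2 / m + 2 * √(1 - β) * s / √(m * n)))) * D +
      (√β * (1 - β) / (q * (1 - β - q)) * (1 + √(β * (1 - β)) / (1 - β - q)) * √(n / m) * s +
        1 / 2 * (β * (1 - β) ^ 2 / (q * (1 - β - q) ^ 2)) + 1 / 2) * R ^ 2 := by
  have hD : 0 ≤ D := by linarith [sq_nonneg d]
  have hcost := div_le_div_of_nonneg_right (corruption_cost_le_of_sq_le hβ₀
    (by linarith) hg hm hn hs hd hQ₀ hdD hQ) hq.le
  have hτD : τ * (q - β) / (2 * q ^ 2 * m) * D ≤ τ * D / (2 * m) / q := by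
    rw [div_div, div_mul_eq_mul_div, div_le_div_iff₀ (by positivity) (by positivity)]
    have : 0 ≤ τ * D * β * m * q := by positivity
    linarith
  calc 1 / (q * m) * X
      ≤ 1 / (q * m) * (m * (q * (D + R ^ 2 / 2) - τ * D / (2 * m) +
          (√β * (s * d / √m) * Q + β * Q ^ 2 / 2))) := by gcongr
    _ = D + R ^ 2 / 2 - τ * D / (2 * m) / q +
          (√β * (s * d / √m) * Q + β * Q ^ 2 / 2) / q := by field_simp
    _ ≤ D + R ^ 2 / 2 - τ * (q - β) / (2 * q ^ 2 * m) * D + _ / q :=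
        add_le_add (sub_le_sub_left hτD _) hcost
    _ = _ := by
      simp only [div_eq_mul_inv, mul_inv]
      ring

end Constants

section InexactStep

theorem ip_sub_sub_mulVec_sub {I J : Type*} [Fintype J] {A : Matrix I J ℝ} {b c r : I → ℝ}
    {x y : J → ℝ} (hb : b = A.mulVec y + c + r) {i : I} (hc : c i = 0) :
    ip (A i) x - b i - A.mulVec (x - y) i = -r i := by
  rw [hb, Matrix.mulVec_sub, Pi.sub_apply, Pi.add_apply, Pi.add_apply, hc]
  simp only [ip_eq_dotProduct, Matrix.mulVec]
  ring

theorem sum_breg_sub_smul_le_mul {m n : ℕ} {f : (Fin n → ℝ) → ℝ} {g x y : Fin n → ℝ} {α : ℝ}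
    (hf : ∀ z, 1 / 2 * enorm2 (z - x) ^ 2 ≤ breg f g x z)
    (hα : α * breg f g x y ≤ enorm2 (x - y) ^ 2) {A : Matrix (Fin m) (Fin n) ℝ}
    (hrows : ∀ i, enorm2 (A i) = 1) (hm : 0 < (m : ℝ)) {q β : ℝ} (hβ : 0 ≤ β) {k : ℕ}
    (hk : (k : ℝ) = (q - β) * m) {N C : Finset (Fin m)} (hNcard : (N.card : ℝ) = q * m)
    (hCcard : (C.card : ℝ) = β * m) {t : Fin m → ℝ} {Q R : ℝ} (hQ : 0 ≤ Q)
    (hN : ∀ i ∈ N, |t i| ≤ Q) (hC : ∀ i ∉ C, |t i - A.mulVec (x - y) i| ≤ R)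
    (x' : Fin m → Fin n → ℝ) :
    ∑ i ∈ N, breg f (g - t i • A i) (x' i) y ≤
      m * (q * (breg f g x y + R ^ 2 / 2) -
        α * sigmaTildeQBMin A k ^ 2 * breg f g x y / (2 * m) +
        (√β * (sigmaMax A * enorm2 (x - y) / √m) * Q + β * Q ^ 2 / 2)) := by
  have hsum := sum_breg_sub_smul_le hf hrows hQ hN hC x'
  have hkcard : k ≤ (N \ C).card := by
    have hle : (N.card : ℝ) ≤ (N \ C).card + C.card := by
      exact_mod_cast Finset.card_le_card_sdiff_add_card
    rw [← Nat.cast_le (α := ℝ)]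
    linarith
  have hdescent := (mul_le_mul_of_nonneg_left hα (sq_nonneg (sigmaTildeQBMin A k))).trans
    (sigmaTildeQBMin_sq_mul_enorm2_sq_le A hkcard (x - y))
  have hcancel : m * (α * sigmaTildeQBMin A k ^ 2 * breg f g x y / (2 * m)) =
      α * sigmaTildeQBMin A k ^ 2 * breg f g x y / 2 := by
    field_simp
  rw [hNcard, hCcard, sqrt_mul_mul_eq hβ hm] at hsum
  linarith

end InexactStep

theorem stmt10_general {m n : ℕ} {lam : ℝ} (hlam : 0 ≤ lam)
    {f : (Fin n → ℝ) → ℝ} (hf : f = fun x => lam * norm1 x + (1 / 2) * enorm2 x ^ 2)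
    {A : Matrix (Fin m) (Fin n) ℝ} (hrows : ∀ i, enorm2 (A i) = 1)
    {q β : ℝ} (hβq : β < q) (hq : q < 1 - β) {kqb : ℕ} (hkqb : (kqb : ℝ) = (q - β) * m)
    {xhat : Fin n → ℝ} (hAx : A.mulVec xhat ≠ 0)
    {bc r b : Fin m → ℝ} (hb : b = A.mulVec xhat + bc + r)
    {C : Finset (Fin m)} (hCcard : (C.card : ℝ) = β * m) (hbc : ∀ i ∉ C, bc i = 0)
    {αc : ℝ} (hαc : αc = xminOf xhat / (xminOf xhat + 2 * lam))
    {x xs : Fin n → ℝ} (hxs : xs ∈ subdiff f x) {Q : ℝ} {N2 : Finset (Fin m)}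
    (hN2 : ∀ i, i ∈ N2 ↔ |ip (A i) x - b i| ≤ Q) (hN2card : (N2.card : ℝ) = q * m)
    {xs' : Fin m → Fin n → ℝ} (hxs' : ∀ i ∈ N2, xs' i = xs - (ip (A i) x - b i) • A i)
    (x' : Fin m → Fin n → ℝ) {C1 C2 : ℝ}
    (hC1 : C1 = (αc * (q - β) / (2 * q ^ 2)) * (sigmaTildeQBMin A kqb) ^ 2 / m -
        (2 * √(β * (1 - β)) / (q * (1 - β - q))) *
          ((sigmaMax A) ^ 2 / m + √(1 - β) * sigmaMax A / √(m * n)) -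
        (β * (1 - β) / (q * (1 - β - q) ^ 2)) *
          ((sigmaMax A) ^ 2 / m + 2 * √(1 - β) * sigmaMax A / √(m * n)))
    (hC2 : C2 = (√β * (1 - β) / (q * (1 - β - q))) *
          (1 + √(β * (1 - β)) / (1 - β - q)) * √(n / m) * sigmaMax A +
        (1 / 2) * (β * (1 - β) ^ 2 / (q * (1 - β - q) ^ 2)) + 1 / 2) :
    (1 / (q * m)) * ∑ i ∈ N2, breg f (xs' i) (x' i) xhat ≤
      (1 - C1) * breg f xs x xhat + C2 * normInf r ^ 2 := by
  have hm : (0 : ℝ) < m := Nat.cast_pos.2 <| Nat.pos_of_ne_zero <| by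
    rintro rfl
    exact hAx (Subsingleton.elim _ _)
  have hn : (0 : ℝ) < n := Nat.cast_pos.2 <| Nat.pos_of_ne_zero <| by
    rintro rfl
    exact hAx (by rw [Subsingleton.elim xhat 0, Matrix.mulVec_zero])
  have hβ₀ : 0 ≤ β := nonneg_of_mul_nonneg_left (hCcard ▸ Nat.cast_nonneg _) hm
  have hqpos : 0 < q := hβ₀.trans_lt hβq
  have hQ : 0 ≤ Q := by
    obtain ⟨i, hi⟩ : N2.Nonempty := Finset.card_pos.1 <| by
      exact_mod_cast hN2card ▸ mul_pos hqpos hm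
    exact (abs_nonneg _).trans ((hN2 i).1 hi)
  have hresidual : ∀ i ∉ C, |ip (A i) x - b i - A.mulVec (x - xhat) i| ≤ normInf r := by
    intro i hi
    rw [ip_sub_sub_mulVec_sub hb (hbc i hi), abs_neg]
    exact abs_le_normInf r i
  have hthreshold := mul_threshold_le A (x - xhat) (hqpos.trans hq).le (by simpa using hm)
    (by simpa using hN2card) (by simpa using hCcard) hQ (normInf_nonneg r)
    (fun i hi => (not_le.1 (mt (hN2 i).2 hi)).le) hresidual
  have hstrong : ∀ z, 1 / 2 * enorm2 (z - x) ^ 2 ≤ breg f xs x z := by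
    subst hf
    exact half_enorm2_sq_le_breg (convexOn_const_mul_norm1 hlam) hxs
  have hα : αc * breg f xs x xhat ≤ enorm2 (x - xhat) ^ 2 := by
    subst hf hαc
    exact xminOf_div_mul_breg_le hlam hxs xhat
  have hsum := sum_breg_sub_smul_le_mul hstrong hα hrows hm hβ₀ hkqb hN2card hCcard hQ
    (fun i => (hN2 i).1) hresidual x'
  have hdist : enorm2 (x - xhat) ^ 2 ≤ 2 * breg f xs x xhat := by
    rw [enorm2_sub_comm]
    linarith [hstrong xhat]
  have hmin := xminOf_nonneg xhat
  have hrate : αc * (q - β) / (2 * q ^ 2) * sigmaTildeQBMin A kqb ^ 2 / m =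
      αc * sigmaTildeQBMin A kqb ^ 2 * (q - β) / (2 * q ^ 2 * m) := by ring
  rw [Fintype.card_fin] at hthreshold
  rw [Finset.sum_congr rfl fun i hi => by rw [hxs' i hi], hC1, hC2, hrate]
  exact one_div_mul_le_of_corruption_cost hβ₀ hm hn hqpos (by linarith) (sigmaMax_nonneg A)
    (enorm2_nonneg (x - xhat)) hQ (by rw [hαc]; positivity) hdist hthreshold hsum

/-- one-step expectation bound for Quantile-RaSK with inexact step,
Theorem 3.2(a). -/
theorem stmt10 {m n : ℕ} (lam : ℝ) (hlam : 0 < lam)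
    (f : (Fin n → ℝ) → ℝ)
    (hf : f = fun x => lam * norm1 x + (1 / 2) * enorm2 x ^ 2)
    (A : Matrix (Fin m) (Fin n) ℝ)
    (hrank : A.rank = min m n) (hrows : ∀ i, enorm2 (A i) = 1)
    (q β : ℝ) (hβq : β < q) (hq : q < 1 - β)
    (kq kb kqb : ℕ)
    (hkq : (kq : ℝ) = q * m) (hkb : (kb : ℝ) = β * m) (hkqb : (kqb : ℝ) = (q - β) * m)
    (xhat : Fin n → ℝ) (hAx : A.mulVec xhat ≠ 0)
    (hmin : ∀ z, A.mulVec z = A.mulVec xhat → z ≠ xhat → f xhat < f z)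
    (bc r : Fin m → ℝ)
    (hbc : (Finset.univ.filter (fun i => bc i ≠ 0)).card = kb)
    (b : Fin m → ℝ) (hb : b = A.mulVec xhat + bc + r)
    (αc : ℝ) (hαc : αc = xminOf xhat / (xminOf xhat + 2 * lam))
    -- condition (♦)
    (hcond :
      (2 * Real.sqrt (β * (1 - β)) / (1 - β - q)) *
          (sigmaMax A + Real.sqrt ((1 - β) * m / n)) +
        (β * (1 - β) / (1 - β - q) ^ 2) *
          (sigmaMax A + 2 * Real.sqrt ((1 - β) * m / n)) <
      (αc * (q - β) / (2 * q)) * (sigmaTildeQBMin A kqb) ^ 2 / sigmaMax A)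
    (x xs : Fin n → ℝ) (hxs : xs ∈ subdiff f x)
    (hrange : ∃ u : Fin m → ℝ, xs = A.transpose.mulVec u)
    (Q : ℝ) (hQ : Q = quantileAt kq (fun i => |ip (A i) x - b i|))
    (N2 : Finset (Fin m)) (hN2 : N2 = Finset.univ.filter (fun i => |ip (A i) x - b i| ≤ Q))
    (hN2card : N2.card = kq)
    (xs' x' : Fin m → (Fin n → ℝ))
    (hxs' : ∀ i ∈ N2, xs' i = xs - (ip (A i) x - b i) • A i)
    (hx' : ∀ i ∈ N2, x' i = softShrink lam (xs' i))
    (C1 C2 : ℝ)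
    (hC1 : C1 = (αc * (q - β) / (2 * q ^ 2)) * (sigmaTildeQBMin A kqb) ^ 2 / m -
        (2 * Real.sqrt (β * (1 - β)) / (q * (1 - β - q))) *
          ((sigmaMax A) ^ 2 / m + Real.sqrt (1 - β) * sigmaMax A / Real.sqrt (m * n)) -
        (β * (1 - β) / (q * (1 - β - q) ^ 2)) *
          ((sigmaMax A) ^ 2 / m + 2 * Real.sqrt (1 - β) * sigmaMax A / Real.sqrt (m * n)))
    (hC2 : C2 = (Real.sqrt β * (1 - β) / (q * (1 - β - q))) *
          (1 + Real.sqrt (β * (1 - β)) / (1 - β - q)) * Real.sqrt (n / m) * sigmaMax A +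
        (1 / 2) * (β * (1 - β) ^ 2 / (q * (1 - β - q) ^ 2)) + 1 / 2) :
    (1 / (q * m)) * ∑ i ∈ N2, breg f (xs' i) (x' i) xhat ≤
      (1 - C1) * breg f xs x xhat + C2 * normInf r ^ 2 := by
  exact stmt10_general hlam.le hf hrows hβq hq hkqb hAx hb (C := Finset.univ.filter (bc · ≠ 0))
    (by rw [hbc, hkb]) (by simp) hαc hxs (Q := Q) (by simp [hN2]) (by rw [hN2card, hkq]) hxs' x'
    hC1 hC2
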